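/- Quantitative stability of the lens among graph-type perturbations (graph form of Theorem 4.2). For every R ≥ 2 there exist ε₀ ∈ (0, 1/4) and κ₀ > 0 such that the following holds. Let σ be a real with |σ| ≤ ε₀ and let g₁, g₂ : ℝ → ℝ be Lipschitz functions such that: g₁ = g₂ on ℝ ∖ I_σ; g₁ = g₂ = 0 outside [−R, R]; ∫_{I_σ} (g₁ − g₂) dx = m; |g₁(x)| + |g₁'(x)| ≤ ε₀ for a.e. x ∉ I_σ; and |gᵢ(x) − ũᵢ(x)| + |gᵢ'(x) − ũᵢ'(x)| ≤ ε₀ for a.e. x ∈ I_σ (i = 1,2). Then ∫_{ℝ∖I_σ} (√(1 + g₁'²) − 1) dx + ∫_{I_σ} √(1 + g₁'²) dx + ∫_{I_σ} √(1 + g₂'²) dx − 4π/3 − √3·σ ≥ κ₀ · [ (1/2)·( vol(F₁ Δ L₁) + vol(F₂ Δ L₂) + vol(F₃ Δ L₃) ) ]². -/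

import Mathlib

/-!
The argument is a calibration with a quantitative remainder. Write `s = 1 + σ` and let
`G₁ = g₁ - ũ`, `G₂ = g₂ + ũ` be the deviations from the dilated lens. The function
`q ↦ √(1+q²)` is uniformly convex on bounded slopes (`tangent_ineq`), so along each arc the length
density exceeds its tangent line at the slope of the dilated lens by a multiple of `Gᵢ'²`. On an arc
of radius `s` the coefficient of this tangent line is `∓ x/s`, hence the two linear terms add up to
`-(x/s)(g₁ - g₂)'`. Since `g₁ - g₂` vanishes at the ends of `I_σ`, integration by parts turns this
into `(1/s) ∫ (g₁ - g₂) = m/s` (`calibration`). Together with the explicit integral of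
`2 √(1 - (x/s)²)` the terms of order zero and one collapse to `m (s + 1/s - 2) = m σ²/s`.
Off `I_σ` the same convexity inequality at slope zero bounds the excess length below by the energy
of the common graph. The outcome, `deficit_ge`, is

  `deficit ≥ m σ²/s + (1/200) (∫ G₁'² + ∫ G₂'²)`.

No spectral information is needed, because the displacement of the vertices and the dilation are
both controlled by the right-hand side.

The deviations are Lipschitz and vanish outside `[-R, R]`, so the one-dimensional Poincaré
inequality (`sq_le_integral_deriv_sq`) bounds them in sup norm by their energies, while the dilated
and the standard profile differ by `O(|σ|)` (`abs_utilde_sub_ulens_le`). Finally the `L¹`-distance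
of the partitions is at most the area enclosed between corresponding graphs
(`partition_dist_le`).
-/

open MeasureTheory
open scoped symmDiff

/-- `ℓ = √3/2`, the half-width of the unit-radius standard lens. -/
noncomputable def ell : ℝ := Real.sqrt 3 / 2

/-- `m = 2π/3 − √3/2`, the area of the unit-radius standard lens. -/
noncomputable def mlens : ℝ := 2 * Real.pi / 3 - Real.sqrt 3 / 2

/-- The profile `u(x) = √(1−x²) − 1/2` for `|x| ≤ ℓ`, extended by `0`. -/
noncomputable def ulens (x : ℝ) : ℝ :=
  if |x| ≤ ell then Real.sqrt (1 - x ^ 2) - 1 / 2 else 0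

/-- The rescaled profile `ũ(x) = (1+σ)·u(x/(1+σ))`. -/
noncomputable def utilde (σ x : ℝ) : ℝ := (1 + σ) * ulens (x / (1 + σ))

/-- The interval `I_σ = [−(1+σ)ℓ, (1+σ)ℓ]`. -/
noncomputable def Isig (σ : ℝ) : Set ℝ := Set.Icc (-((1 + σ) * ell)) ((1 + σ) * ell)

/-- The region `{(x,y) : h₂(x) < y < h₁(x)}` between the graphs of `h₂` and `h₁`. -/
def graphBetween (h₁ h₂ : ℝ → ℝ) : Set (ℝ × ℝ) := {p | h₂ p.1 < p.2 ∧ p.2 < h₁ p.1}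

/-- The region `{(x,y) : y > h(x)}` above the graph of `h`. -/
def graphAbove (h : ℝ → ℝ) : Set (ℝ × ℝ) := {p | h p.1 < p.2}

/-- The region `{(x,y) : y < h(x)}` below the graph of `h`. -/
def graphBelow (h : ℝ → ℝ) : Set (ℝ × ℝ) := {p | p.2 < h p.1}

/-! ### Uniform convexity of the length density -/

/-- Strong convexity of `q ↦ √(1+q²)` on bounded slopes: the graph lies above its tangent line at
`p`, whose value at `q` is `(1+pq)/√(1+p²)`, by a multiple of `(q-p)²`. -/
lemma tangent_ineq {p q : ℝ} (hp : |p| ≤ 3) (hq : |q| ≤ 3) :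
    (1 + p * q) / Real.sqrt (1 + p ^ 2) + (q - p) ^ 2 / 100 ≤ Real.sqrt (1 + q ^ 2) := by
  have hp2 : p ^ 2 ≤ 9 := by nlinarith [abs_nonneg p, sq_abs p]
  have hq2 : q ^ 2 ≤ 9 := by nlinarith [abs_nonneg q, sq_abs q]
  have hA : 1 ≤ √(1 + p ^ 2) := Real.one_le_sqrt.2 (by nlinarith)
  have hB : 1 ≤ √(1 + q ^ 2) := Real.one_le_sqrt.2 (by nlinarith)
  have hA2 : √(1 + p ^ 2) ^ 2 = 1 + p ^ 2 := Real.sq_sqrt (by positivity)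
  have hB2 : √(1 + q ^ 2) ^ 2 = 1 + q ^ 2 := Real.sq_sqrt (by positivity)
  set A := √(1 + p ^ 2)
  set B := √(1 + q ^ 2)
  have hA4 : A ≤ 4 := by nlinarith
  have hAB : A * B ≤ 10 := by nlinarith [sq_nonneg (A - B)]
  have hpq : p * q ≤ 9 := by nlinarith [sq_nonneg (p - q)]
  have hpr : (A * B - (1 + p * q)) * (A * B + (1 + p * q)) = (q - p) ^ 2 := by
    have : (A * B - (1 + p * q)) * (A * B + (1 + p * q)) = A ^ 2 * B ^ 2 - (1 + p * q) ^ 2 := by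
      ring
    rw [this, hA2, hB2]; ring
  have hab : |1 + p * q| ≤ A * B := by
    apply abs_le_of_sq_le_sq _ (by positivity)
    nlinarith [sq_nonneg (q - p)]
  have hw : 0 ≤ A * B - (1 + p * q) := by linarith [le_abs_self (1 + p * q)]
  have hv : A * (q - p) ^ 2 / 100 ≤ A * B - (1 + p * q) := by
    have h1 : (q - p) ^ 2 ≤ (A * B - (1 + p * q)) * 20 := by
      rw [← hpr]; exact mul_le_mul_of_nonneg_left (by linarith) hw
    have h2 : A * (q - p) ^ 2 ≤ 4 * (q - p) ^ 2 :=
      mul_le_mul_of_nonneg_right hA4 (sq_nonneg _)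
    linarith
  have hA0 : 0 < A := by linarith
  rw [← sub_nonneg]
  have : B - ((1 + p * q) / A + (q - p) ^ 2 / 100)
      = (A * B - (1 + p * q) - A * (q - p) ^ 2 / 100) / A := by
    field_simp
    ring
  rw [this]
  exact div_nonneg (by linarith) hA0.le

/-! ### The lens profile -/

lemma ell_pos : 0 < ell := by unfold ell; positivity

lemma ell_sq : ell ^ 2 = 3 / 4 := by
  unfold ell; rw [div_pow, Real.sq_sqrt (by norm_num)]; norm_num

lemma ell_lt_one : ell < 1 := by nlinarith [ell_pos, ell_sq]

lemma ulens_eq (x : ℝ) : ulens x = √(1 - (min |x| ell) ^ 2) - 1 / 2 := by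
  unfold ulens
  split_ifs with h
  · rw [min_eq_left h, sq_abs]
  · rw [min_eq_right (not_le.1 h).le, ell_sq]
    have : (1 - 3 / 4 : ℝ) = (1 / 2) ^ 2 := by norm_num
    rw [this, Real.sqrt_sq (by norm_num)]; ring

lemma ulens_nonneg (x : ℝ) : 0 ≤ ulens x := by
  rw [ulens_eq, sub_nonneg]
  apply Real.le_sqrt_of_sq_le
  have h0 : 0 ≤ min |x| ell := le_min (abs_nonneg x) ell_pos.le
  nlinarith [min_le_right |x| ell, ell_sq]

lemma ulens_le (x : ℝ) : ulens x ≤ 1 / 2 := by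
  rw [ulens_eq]
  have : √(1 - (min |x| ell) ^ 2) ≤ 1 := Real.sqrt_le_one.2 (by nlinarith)
  linarith

lemma ulens_sub_le (x y : ℝ) : |ulens x - ulens y| ≤ 2 * |x - y| := by
  have hmin : |min |x| ell - min |y| ell| ≤ |x - y| :=
    (abs_min_sub_min_le_max _ _ _ _).trans (by simpa using abs_abs_sub_abs_le_abs_sub x y)
  have hx := ulens_nonneg x
  have hy := ulens_nonneg y
  rw [ulens_eq] at hx hy ⊢
  rw [ulens_eq]
  have ha0 : 0 ≤ min |x| ell := le_min (abs_nonneg x) ell_pos.le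
  have hb0 : 0 ≤ min |y| ell := le_min (abs_nonneg y) ell_pos.le
  have ha1 : min |x| ell ≤ 1 := (min_le_right _ _).trans ell_lt_one.le
  have hb1 : min |y| ell ≤ 1 := (min_le_right _ _).trans ell_lt_one.le
  set a := min |x| ell
  set b := min |y| ell
  have hA2 : √(1 - a ^ 2) ^ 2 = 1 - a ^ 2 := Real.sq_sqrt (by nlinarith)
  have hB2 : √(1 - b ^ 2) ^ 2 = 1 - b ^ 2 := Real.sq_sqrt (by nlinarith)
  set A := √(1 - a ^ 2)
  set B := √(1 - b ^ 2)
  have e1 : |A - B| * (A + B) = |a - b| * (a + b) := by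
    have h1 : |A - B| * (A + B) = |A ^ 2 - B ^ 2| := by
      rw [← abs_of_nonneg (show 0 ≤ A + B by linarith), ← abs_mul]
      congr 1; ring
    have h2 : |a - b| * (a + b) = |b ^ 2 - a ^ 2| := by
      rw [← abs_of_nonneg (show 0 ≤ a + b by linarith), ← abs_mul, ← abs_neg]
      congr 1; ring
    rw [h1, h2, hA2, hB2]; congr 1; ring
  have e2 : |A - B| ≤ |A - B| * (A + B) := le_mul_of_one_le_right (abs_nonneg _) (by linarith)
  have e3 : |a - b| * (a + b) ≤ |a - b| * 2 :=
    mul_le_mul_of_nonneg_left (by linarith) (abs_nonneg _)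
  have : A - 1 / 2 - (B - 1 / 2) = A - B := by ring
  rw [this]; linarith

lemma ulens_zero {x : ℝ} (h : ell < |x|) : ulens x = 0 := by
  unfold ulens; rw [if_neg (not_le.2 h)]

lemma abs_div_gt {s x : ℝ} (hs : 0 < s) (hx : x ∉ Set.Icc (-(s * ell)) (s * ell)) :
    ell < |x / s| := by
  rw [abs_div, abs_of_pos hs, lt_div_iff₀ hs, mul_comm]
  by_contra h
  exact hx (Set.mem_Icc.2 (abs_le.1 (not_lt.1 h)))

lemma utilde_zero {σ x : ℝ} (hs : 0 < 1 + σ) (hx : x ∉ Isig σ) : utilde σ x = 0 := by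
  unfold utilde; rw [ulens_zero (abs_div_gt hs hx), mul_zero]

lemma utilde_lipschitz {σ : ℝ} (hs : 0 < 1 + σ) : LipschitzWith 2 (utilde σ) := by
  apply LipschitzWith.of_dist_le_mul
  intro x y
  rw [Real.dist_eq, Real.dist_eq]
  unfold utilde
  rw [← mul_sub, abs_mul, abs_of_pos hs]
  have h := ulens_sub_le (x / (1 + σ)) (y / (1 + σ))
  rw [← sub_div, abs_div, abs_of_pos hs] at h
  calc _ ≤ (1 + σ) * (2 * (|x - y| / (1 + σ))) := mul_le_mul_of_nonneg_left h hs.le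
    _ = _ := by simp; field_simp

lemma ulens_lipschitz : LipschitzWith 2 ulens := by
  have := utilde_lipschitz (σ := 0) (by norm_num)
  have e : utilde 0 = ulens := by ext x; simp [utilde]
  rwa [e] at this

lemma abs_deriv_utilde_le {σ : ℝ} (hs : 0 < 1 + σ) (x : ℝ) : |deriv (utilde σ) x| ≤ 2 := by
  simpa using norm_deriv_le_of_lipschitz (utilde_lipschitz hs) (x₀ := x)

/-- Inside `I_σ` the profile is a circular arc of radius `1+σ`. -/
lemma utilde_hasDerivAt {σ x : ℝ} (hs : 0 < 1 + σ)
    (hx : x ∈ Set.Ioo (-((1 + σ) * ell)) ((1 + σ) * ell)) :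
    HasDerivAt (utilde σ) (-(x / (1 + σ)) / √(1 - (x / (1 + σ)) ^ 2)) x := by
  have hne : (1 + σ) ≠ 0 := hs.ne'
  have hev : utilde σ =ᶠ[nhds x] fun y => (1 + σ) * (√(1 - (y / (1 + σ)) ^ 2) - 1 / 2) := by
    filter_upwards [isOpen_Ioo.mem_nhds hx] with y hy
    unfold utilde ulens
    rw [if_pos]
    rw [abs_div, abs_of_pos hs, div_le_iff₀ hs, mul_comm]
    exact abs_le.2 ⟨hy.1.le, hy.2.le⟩
  have hpos : 0 < 1 - (x / (1 + σ)) ^ 2 := by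
    have : |x / (1 + σ)| < ell := by
      rw [abs_div, abs_of_pos hs, div_lt_iff₀ hs, mul_comm]
      exact abs_lt.2 hx
    nlinarith [sq_abs (x / (1 + σ)), abs_nonneg (x / (1 + σ)), ell_sq, ell_pos]
  refine HasDerivAt.congr_of_eventuallyEq ?_ hev
  have h1 : HasDerivAt (fun y : ℝ => y / (1 + σ)) (1 / (1 + σ)) x := (hasDerivAt_id x).div_const _
  have h2 := ((h1.fun_pow 2).const_sub 1).sqrt hpos.ne'
  have h3 := (h2.sub_const (1 / 2)).const_mul (1 + σ)
  refine h3.congr_deriv ?_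
  have hr := (Real.sqrt_pos.2 hpos).ne'
  generalize √(1 - (x / (1 + σ)) ^ 2) = r at hr ⊢
  norm_num
  field_simp

lemma integral_circle :
    ∫ t in (-ell)..ell, √(1 - t ^ 2) = Real.pi / 3 + Real.sqrt 3 / 4 := by
  have harc : Real.arcsin ell = Real.pi / 3 := by
    unfold ell
    rw [← Real.sin_pi_div_three, Real.arcsin_sin] <;> linarith [Real.pi_pos]
  have hd : ∀ t ∈ Set.uIcc (-ell) ell,
      HasDerivAt (fun t => (Real.arcsin t + t * √(1 - t ^ 2)) / 2) (√(1 - t ^ 2)) t := by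
    intro t ht
    rw [Set.uIcc_of_le (by linarith [ell_pos])] at ht
    have h1 := ell_lt_one
    have hpos : 0 < 1 - t ^ 2 := by nlinarith [ht.1, ht.2]
    have a1 := Real.hasDerivAt_arcsin (x := t) (by linarith [ht.1]) (by linarith [ht.2])
    have a2 := ((hasDerivAt_pow 2 t).const_sub 1).sqrt hpos.ne'
    have a3 := (a1.add ((hasDerivAt_id t).mul a2)).div_const 2
    refine HasDerivAt.congr_deriv a3 ?_
    have h0 := (Real.sqrt_pos.2 hpos).ne'
    have h2 := Real.sq_sqrt hpos.le
    simp only [id]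
    field_simp
    simp only [h2]
    norm_num
    ring
  rw [intervalIntegral.integral_eq_sub_of_hasDerivAt hd
    (Continuous.intervalIntegrable (by fun_prop) _ _)]
  have h4 : √(1 - ell ^ 2) = 1 / 2 := by
    rw [ell_sq, show (1 - 3 / 4 : ℝ) = (1 / 2) ^ 2 by norm_num, Real.sqrt_sq (by norm_num)]
  rw [Real.arcsin_neg, harc, neg_sq, h4]
  unfold ell; ring

lemma abs_utilde_sub_ulens_le {σ R x : ℝ} (hσ : |σ| ≤ 1 / 8) (hR : 2 ≤ R)
    (hx : |x| ≤ R) : |utilde σ x - ulens x| ≤ 4 * R * |σ| := by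
  have hs : 7 / 8 ≤ 1 + σ := by linarith [(abs_le.1 hσ).1]
  have h1 := ulens_sub_le (x / (1 + σ)) x
  have e : utilde σ x - ulens x = σ * ulens (x / (1 + σ)) + (ulens (x / (1 + σ)) - ulens x) := by
    unfold utilde; ring
  have h2 : |x / (1 + σ) - x| ≤ R * (8 / 7 * |σ|) := by
    have : x / (1 + σ) - x = x * (-σ / (1 + σ)) := by field_simp; ring
    rw [this, abs_mul, abs_div, abs_neg, abs_of_pos (show 0 < 1 + σ by linarith)]
    apply mul_le_mul hx _ (by positivity) (by linarith)
    rw [div_le_iff₀ (by linarith)]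
    nlinarith [abs_nonneg σ]
  have h3 : |σ * ulens (x / (1 + σ))| ≤ |σ| * (1 / 2) := by
    rw [abs_mul, abs_of_nonneg (ulens_nonneg _)]
    exact mul_le_mul_of_nonneg_left (ulens_le _) (abs_nonneg _)
  rw [e]
  have := abs_add_le (σ * ulens (x / (1 + σ))) (ulens (x / (1 + σ)) - ulens x)
  nlinarith [abs_nonneg σ, mul_nonneg (abs_nonneg σ) (sub_nonneg.2 hR)]

/-! ### Lipschitz functions on the line -/

lemma lipschitz_ac {K : NNReal} {G : ℝ → ℝ} (hG : LipschitzWith K G) (a b : ℝ) :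
    AbsolutelyContinuousOnInterval G a b :=
  (hG.lipschitzOnWith (s := Set.uIcc a b)).absolutelyContinuousOnInterval

lemma abs_deriv_le {K : NNReal} {G : ℝ → ℝ} (hG : LipschitzWith K G) (x : ℝ) :
    |deriv G x| ≤ K := by
  simpa using norm_deriv_le_of_lipschitz hG (x₀ := x)

lemma integrable_of_bdd_supp {φ : ℝ → ℝ} {C T : ℝ} (hm : Measurable φ) (hb : ∀ x, |φ x| ≤ C)
    (h0 : ∀ x ∉ Set.Icc (-T) T, φ x = 0) : Integrable φ := by
  rw [← integrableOn_iff_integrable_of_support_subset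
    (s := Set.Icc (-T) T) (fun x hx => by_contra fun h => hx (h0 x h))]
  exact Measure.integrableOn_of_bounded (M := C) (by simp) hm.aestronglyMeasurable
    (Filter.Eventually.of_forall hb)

lemma deriv_zero_off {φ : ℝ → ℝ} {a b : ℝ} (h0 : ∀ x ∉ Set.Icc a b, φ x = 0)
    {x : ℝ} (hx : x ∉ Set.Icc a b) : deriv φ x = 0 := by
  have : φ =ᶠ[nhds x] fun _ => 0 := by
    filter_upwards [isClosed_Icc.isOpen_compl.mem_nhds hx] with y hy using h0 y hy
  rw [this.deriv_eq]; simp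

lemma integrable_deriv_sq {K : NNReal} {G : ℝ → ℝ} {T : ℝ} (hG : LipschitzWith K G)
    (h0 : ∀ x ∉ Set.Icc (-T) T, G x = 0) : Integrable (fun x => deriv G x ^ 2) := by
  refine integrable_of_bdd_supp (C := (K : ℝ) ^ 2) (T := T) (by fun_prop) (fun x => ?_)
    (fun x hx => by simp [deriv_zero_off h0 hx])
  rw [abs_of_nonneg (sq_nonneg _), ← sq_abs]
  exact pow_le_pow_left₀ (abs_nonneg _) (abs_deriv_le hG x) 2

/-- One-dimensional Poincaré inequality in sup norm: the fundamental theorem of calculus followed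
by the Cauchy–Schwarz inequality. -/
lemma sq_le_integral_deriv_sq {K : NNReal} {G : ℝ → ℝ} {T : ℝ} (hG : LipschitzWith K G)
    (hT : 0 < T) (h0 : ∀ x ∉ Set.Icc (-T) T, G x = 0) (hT0 : G (-T) = 0) (x : ℝ) :
    G x ^ 2 ≤ 2 * T * ∫ y, deriv G y ^ 2 := by
  have hint := integrable_deriv_sq hG h0
  have hQ : 0 ≤ ∫ y, deriv G y ^ 2 := integral_nonneg fun _ => sq_nonneg _
  by_cases hx : x ∈ Set.Icc (-T) T
  swap
  · rw [h0 x hx, zero_pow two_ne_zero]; positivity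
  have hle : -T ≤ x := hx.1
  have hftc : ∫ y in (-T)..x, deriv G y = G x := by
    rw [(lipschitz_ac hG (-T) x).integral_deriv_eq_sub, hT0, sub_zero]
  have hd : IntervalIntegrable (deriv G) volume (-T) x :=
    (lipschitz_ac hG (-T) x).intervalIntegrable_deriv
  have hd2 : IntervalIntegrable (fun y => deriv G y ^ 2) volume (-T) x :=
    hint.intervalIntegrable
  -- Integrating `0 ≤ (G' - c)²` with `c = G x / (2T)` gives the Cauchy–Schwarz bound.
  set c := G x / (2 * T) with hc
  have hkey : 0 ≤ ∫ y in (-T)..x, (deriv G y ^ 2 - 2 * c * deriv G y + c ^ 2) :=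
    intervalIntegral.integral_nonneg hle fun y _ => by nlinarith [sq_nonneg (deriv G y - c)]
  rw [intervalIntegral.integral_add (hd2.sub (hd.const_mul _)) (by simp),
    intervalIntegral.integral_sub hd2 (hd.const_mul _), intervalIntegral.integral_const_mul,
    hftc, intervalIntegral.integral_const] at hkey
  have hmono : ∫ y in (-T)..x, deriv G y ^ 2 ≤ ∫ y, deriv G y ^ 2 := by
    rw [intervalIntegral.integral_of_le hle]
    exact setIntegral_le_integral hint (Filter.Eventually.of_forall fun _ => sq_nonneg _)
  have hcx : G x = 2 * T * c := by rw [hc]; field_simp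
  have h1 : (x - -T) * c ^ 2 ≤ 2 * T * c ^ 2 :=
    mul_le_mul_of_nonneg_right (by linarith [hx.2]) (sq_nonneg _)
  rw [smul_eq_mul, hcx] at hkey
  have h2 : 2 * T * c ^ 2 ≤ ∫ y, deriv G y ^ 2 := by nlinarith
  rw [hcx]
  calc (2 * T * c) ^ 2 = 2 * T * (2 * T * c ^ 2) := by ring
    _ ≤ _ := mul_le_mul_of_nonneg_left h2 (by positivity)

/-! ### Areas between graphs -/

/-- The closed region enclosed between the graphs of `f` and `g`, in whichever order they lie. -/
def graphGap (f g : ℝ → ℝ) : Set (ℝ × ℝ) :=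
  {p | min (f p.1) (g p.1) ≤ p.2 ∧ p.2 ≤ max (f p.1) (g p.1)}

lemma volume_graphGap_le {f g : ℝ → ℝ} {M T : ℝ} (hf : Continuous f) (hg : Continuous g)
    (hM : ∀ x, |f x - g x| ≤ M) (h0 : ∀ x ∉ Set.Icc (-T) T, f x = g x) :
    volume (graphGap f g) ≤ ENNReal.ofReal (M * (2 * T)) := by
  have hM0 : 0 ≤ M := (abs_nonneg _).trans (hM 0)
  have hcl : IsClosed (graphGap f g) := by
    have c₁ : Continuous fun p : ℝ × ℝ => min (f p.1) (g p.1) := by fun_prop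
    have c₂ : Continuous fun p : ℝ × ℝ => max (f p.1) (g p.1) := by fun_prop
    exact (isClosed_le c₁ continuous_snd).inter (isClosed_le continuous_snd c₂)
  have hprod : volume (graphGap f g) = ∫⁻ x, volume (Prod.mk x ⁻¹' graphGap f g) := by
    rw [Measure.volume_eq_prod, Measure.prod_apply hcl.measurableSet]
  have hsec : ∀ x, Prod.mk x ⁻¹' graphGap f g = Set.Icc (min (f x) (g x)) (max (f x) (g x)) :=
    fun x => rfl
  have hle : ∀ x, volume (Prod.mk x ⁻¹' graphGap f g)
      ≤ (Set.Icc (-T) T).indicator (fun _ => ENNReal.ofReal M) x := by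
    intro x
    rw [hsec, Real.volume_Icc, max_sub_min_eq_abs']
    by_cases hx : x ∈ Set.Icc (-T) T
    · rw [Set.indicator_of_mem hx]
      exact ENNReal.ofReal_le_ofReal (hM x)
    · rw [Set.indicator_of_notMem hx, h0 x hx]; simp
  rw [hprod]
  refine (lintegral_mono hle).trans ?_
  rw [lintegral_indicator_const measurableSet_Icc, Real.volume_Icc, ← ENNReal.ofReal_mul hM0]
  apply ENNReal.ofReal_le_ofReal
  rw [show T - -T = 2 * T by ring]

lemma above_subset (f g : ℝ → ℝ) : graphAbove f ∆ graphAbove g ⊆ graphGap f g := by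
  rintro ⟨x, y⟩ (⟨h1, h2⟩ | ⟨h1, h2⟩) <;>
    simp only [graphAbove, graphGap, Set.mem_ofPred_eq, not_lt, min_le_iff, le_max_iff] at * <;>
    grind

lemma below_subset (f g : ℝ → ℝ) : graphBelow f ∆ graphBelow g ⊆ graphGap f g := by
  rintro ⟨x, y⟩ (⟨h1, h2⟩ | ⟨h1, h2⟩) <;>
    simp only [graphBelow, graphGap, Set.mem_ofPred_eq, not_lt, min_le_iff, le_max_iff] at * <;>
    grind

lemma between_subset (f₁ f₂ g₁ g₂ : ℝ → ℝ) :
    graphBetween f₁ f₂ ∆ graphBetween g₁ g₂ ⊆ graphGap f₁ g₁ ∪ graphGap f₂ g₂ := by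
  rintro ⟨x, y⟩ (⟨h1, h2⟩ | ⟨h1, h2⟩) <;>
    simp only [graphBetween, graphGap, Set.mem_union, Set.mem_ofPred_eq, min_le_iff, le_max_iff]
      at * <;>
    grind

/-- The `L¹`-distance of the partitions is at most the sum of the `L¹`-distances of the graphs,
here estimated through their sup norm distances. -/
lemma partition_dist_le {g₁ g₂ v₁ v₂ : ℝ → ℝ} {M₁ M₂ T : ℝ} (hT : 0 < T)
    (hg₁ : Continuous g₁) (hg₂ : Continuous g₂) (hv₁ : Continuous v₁) (hv₂ : Continuous v₂)
    (hM₁ : ∀ x, |g₁ x - v₁ x| ≤ M₁) (hM₂ : ∀ x, |g₂ x - v₂ x| ≤ M₂)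
    (h₁ : ∀ x ∉ Set.Icc (-T) T, g₁ x = v₁ x) (h₂ : ∀ x ∉ Set.Icc (-T) T, g₂ x = v₂ x) :
    (volume (graphBetween g₁ g₂ ∆ graphBetween v₁ v₂) + volume (graphAbove g₁ ∆ graphAbove v₁)
      + volume (graphBelow g₂ ∆ graphBelow v₂)).toReal / 2 ≤ 2 * T * (M₁ + M₂) := by
  have p₁ : 0 ≤ M₁ * (2 * T) := mul_nonneg ((abs_nonneg _).trans (hM₁ 0)) (by positivity)
  have p₂ : 0 ≤ M₂ * (2 * T) := mul_nonneg ((abs_nonneg _).trans (hM₂ 0)) (by positivity)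
  have k₁ := volume_graphGap_le hg₁ hv₁ hM₁ h₁
  have k₂ := volume_graphGap_le hg₂ hv₂ hM₂ h₂
  have e₁ := (measure_mono (μ := volume) (between_subset g₁ g₂ v₁ v₂)).trans
    ((measure_union_le _ _).trans (add_le_add k₁ k₂))
  have e₂ := (measure_mono (μ := volume) (above_subset g₁ v₁)).trans k₁
  have e₃ := (measure_mono (μ := volume) (below_subset g₂ v₂)).trans k₂
  have e := add_le_add (add_le_add e₁ e₂) e₃
  rw [← ENNReal.ofReal_add p₁ p₂, ← ENNReal.ofReal_add (by positivity) p₁,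
    ← ENNReal.ofReal_add (by positivity) p₂] at e
  have := ENNReal.toReal_le_of_le_ofReal (by positivity) e
  linarith

/-! ### The calibration estimate -/

lemma eq_zero_of_zero_off {h : ℝ → ℝ} {a : ℝ} (hc : Continuous h)
    (h0 : ∀ x ∉ Set.Icc (-a) a, h x = 0) : h a = 0 ∧ h (-a) = 0 := by
  have hcl : IsClosed {x | h x = 0} := isClosed_eq hc continuous_const
  constructor
  · have : Set.Ioi a ⊆ {x | h x = 0} := fun x hx => h0 x fun hx' => not_lt.2 hx'.2 hx
    have h1 := hcl.closure_subset_iff.2 this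
    rw [closure_Ioi] at h1
    exact h1 Set.self_mem_Ici
  · have : Set.Iio (-a) ⊆ {x | h x = 0} := fun x hx => h0 x fun hx' => not_lt.2 hx'.1 hx
    have h1 := hcl.closure_subset_iff.2 this
    rw [closure_Iio] at h1
    exact h1 Set.self_mem_Iic

/-- Integration by parts against the radial calibration `x/s`: a height difference `h` that
vanishes off `[-a,a]` contributes only through its area. -/
lemma calibration {K : NNReal} {h : ℝ → ℝ} {a s : ℝ} (ha : 0 ≤ a) (hh : LipschitzWith K h)
    (h0 : ∀ x ∉ Set.Icc (-a) a, h x = 0) :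
    ∫ x in Set.Icc (-a) a, x / s * deriv h x = -(1 / s) * ∫ x in Set.Icc (-a) a, h x := by
  obtain ⟨h1, h2⟩ := eq_zero_of_zero_off hh.continuous h0
  have hid : AbsolutelyContinuousOnInterval (fun x : ℝ => s⁻¹ * x) (-a) a :=
    (lipschitz_ac LipschitzWith.id (-a) a).const_mul s⁻¹
  have key := hid.integral_mul_deriv_eq_deriv_mul (lipschitz_ac hh (-a) a)
  have hder : ∀ x : ℝ, deriv (fun x : ℝ => s⁻¹ * x) x = s⁻¹ := fun x => by
    simp
  simp only [hder, h1, h2, intervalIntegral.integral_const_mul] at key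
  rw [integral_Icc_eq_integral_Ioc, integral_Icc_eq_integral_Ioc,
    ← intervalIntegral.integral_of_le (by linarith), ← intervalIntegral.integral_of_le (by linarith)]
  calc _ = ∫ x in (-a)..a, s⁻¹ * x * deriv h x := by
        congr 1; ext x; ring
    _ = _ := by rw [key]; ring

lemma integral_arc {s : ℝ} (hs : 0 < s) :
    ∫ x in Set.Icc (-(s * ell)) (s * ell), √(1 - (x / s) ^ 2)
      = s * (Real.pi / 3 + Real.sqrt 3 / 4) := by
  have := mul_pos hs ell_pos
  rw [integral_Icc_eq_integral_Ioc, ← intervalIntegral.integral_of_le (by linarith),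
    intervalIntegral.integral_comp_div (fun t => √(1 - t ^ 2)) hs.ne', neg_div,
    mul_div_cancel_left₀ _ hs.ne', integral_circle, smul_eq_mul]

/-- `tangent_ineq` at the slope `-t/√(1-t²)` of the unit circle and at its opposite. -/
lemma arc_ineq {t p q₁ q₂ : ℝ} (ht : |t| < 1) (hp : p = -t / √(1 - t ^ 2)) (hp2 : |p| ≤ 2)
    (h₁ : |q₁ - p| ≤ 1 / 8) (h₂ : |q₂ + p| ≤ 1 / 8) :
    2 * √(1 - t ^ 2) - t * (q₁ - q₂) + ((q₁ - p) ^ 2 + (q₂ + p) ^ 2) / 100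
      ≤ √(1 + q₁ ^ 2) + √(1 + q₂ ^ 2) := by
  have hpos : 0 < 1 - t ^ 2 := by nlinarith [sq_abs t, abs_nonneg t]
  have hr := Real.sqrt_pos.2 hpos
  have hr2 := Real.sq_sqrt hpos.le
  set r := √(1 - t ^ 2)
  have hA : √(1 + p ^ 2) = 1 / r := by
    rw [show 1 + p ^ 2 = (1 / r) ^ 2 by rw [hp]; field_simp; linarith, Real.sqrt_sq (by positivity)]
  rw [abs_le] at hp2 h₁ h₂
  have b₁ := tangent_ineq (p := p) (q := q₁) (abs_le.2 ⟨by linarith, by linarith⟩)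
    (abs_le.2 ⟨by linarith, by linarith⟩)
  have b₂ := tangent_ineq (p := -p) (q := q₂) (abs_le.2 ⟨by linarith, by linarith⟩)
    (abs_le.2 ⟨by linarith, by linarith⟩)
  rw [neg_sq] at b₂
  have c₁ : (1 + p * q₁) / √(1 + p ^ 2) = r - t * q₁ := by rw [hA, hp]; field_simp; ring
  have c₂ : (1 + -p * q₂) / √(1 + p ^ 2) = r + t * q₂ := by rw [hA, hp]; field_simp
  rw [c₁] at b₁
  rw [c₂, sub_neg_eq_add] at b₂
  linarith

lemma abs_sqrt_sub_one_le {K d : ℝ} (hd : |d| ≤ K) : |√(1 + d ^ 2) - 1| ≤ K ^ 2 := by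
  have h1 : 1 ≤ √(1 + d ^ 2) := Real.one_le_sqrt.2 (by nlinarith)
  have h2 : √(1 + d ^ 2) ^ 2 = 1 + d ^ 2 := Real.sq_sqrt (by positivity)
  have h3 : d ^ 2 ≤ K ^ 2 := by
    rw [← sq_abs]; exact pow_le_pow_left₀ (abs_nonneg _) hd 2
  rw [abs_of_nonneg (by linarith)]
  nlinarith

/-- The deficit controls the square of the dilation parameter and the Dirichlet energies of the
deviations from the dilated lens. -/
lemma deficit_ge {R σ : ℝ} (hσ : |σ| ≤ 1 / 8) {g₁ g₂ : ℝ → ℝ} {K₁ K₂ : NNReal}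
    (hL₁ : LipschitzWith K₁ g₁) (hL₂ : LipschitzWith K₂ g₂)
    (heq : ∀ x ∉ Isig σ, g₁ x = g₂ x)
    (hz : ∀ x ∉ Set.Icc (-R) R, g₁ x = 0 ∧ g₂ x = 0)
    (hIR : Isig σ ⊆ Set.Icc (-R) R)
    (harea : (∫ x in Isig σ, (g₁ x - g₂ x)) = mlens)
    (hout : ∀ᵐ x ∂(volume : Measure ℝ), x ∉ Isig σ → |deriv g₁ x| ≤ 1 / 8)
    (hin : ∀ᵐ x ∂(volume : Measure ℝ), x ∈ Isig σ →
      |deriv g₁ x - deriv (utilde σ) x| ≤ 1 / 8 ∧ |deriv g₂ x + deriv (utilde σ) x| ≤ 1 / 8) :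
    mlens * (σ ^ 2 / (1 + σ)) + (∫ x, deriv (fun y => g₁ y - utilde σ y) x ^ 2) / 200
        + (∫ x, deriv (fun y => g₂ y + utilde σ y) x ^ 2) / 200
      ≤ (∫ x in (Isig σ)ᶜ, (Real.sqrt (1 + (deriv g₁ x) ^ 2) - 1))
          + (∫ x in Isig σ, Real.sqrt (1 + (deriv g₁ x) ^ 2))
          + (∫ x in Isig σ, Real.sqrt (1 + (deriv g₂ x) ^ 2))
          - 4 * Real.pi / 3 - Real.sqrt 3 * σ := by
  have hs : 0 < 1 + σ := by linarith [(abs_le.1 hσ).1]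
  have ha := mul_pos hs ell_pos
  have hLG₁ : LipschitzWith (K₁ + 2) (fun y => g₁ y - utilde σ y) := hL₁.sub (utilde_lipschitz hs)
  have hLG₂ : LipschitzWith (K₂ + 2) (fun y => g₂ y + utilde σ y) := hL₂.add (utilde_lipschitz hs)
  have hmI : MeasurableSet (Isig σ) := measurableSet_Icc
  have hi₁ := integrable_deriv_sq (T := R) hLG₁ fun x hx => by
    rw [(hz x hx).1, utilde_zero hs fun h => hx (hIR h), sub_zero]
  have hi₂ := integrable_deriv_sq (T := R) hLG₂ fun x hx => by
    rw [(hz x hx).2, utilde_zero hs fun h => hx (hIR h), add_zero]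
  have hfin : volume (Isig σ) ≠ ⊤ := by unfold Isig; simp
  -- Off `I_σ` the two interfaces coincide, so the single graph pays for both energies.
  have houter : ∫ x in (Isig σ)ᶜ, (deriv (fun y => g₁ y - utilde σ y) x ^ 2
        + deriv (fun y => g₂ y + utilde σ y) x ^ 2) / 200
      ≤ ∫ x in (Isig σ)ᶜ, (√(1 + (deriv g₁ x) ^ 2) - 1) := by
    refine setIntegral_mono_on_ae ((hi₁.add hi₂).div_const 200).integrableOn ?_ hmI.compl ?_
    · refine (integrable_of_bdd_supp (C := (K₁ : ℝ) ^ 2) (T := R) (by fun_prop)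
        (fun x => abs_sqrt_sub_one_le (abs_deriv_le hL₁ x)) fun x hx => ?_).integrableOn
      rw [deriv_zero_off (fun x hx => (hz x hx).1) hx]; simp
    · filter_upwards [hout] with x hx hxI
      have hnear : ∀ᶠ y in nhds x, y ∉ Isig σ := isClosed_Icc.isOpen_compl.mem_nhds hxI
      have d₁ : deriv (fun y => g₁ y - utilde σ y) x = deriv g₁ x := by
        apply Filter.EventuallyEq.deriv_eq
        filter_upwards [hnear] with y hy
        rw [utilde_zero hs hy, sub_zero]
      have d₂ : deriv (fun y => g₂ y + utilde σ y) x = deriv g₁ x := by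
        apply Filter.EventuallyEq.deriv_eq
        filter_upwards [hnear] with y hy
        rw [utilde_zero hs hy, add_zero, heq y hy]
      have := tangent_ineq (p := 0) (q := deriv g₁ x) (by norm_num) (by linarith [hx hxI])
      rw [d₁, d₂]
      simp only [zero_mul, sub_zero, zero_pow two_ne_zero, add_zero, Real.sqrt_one, div_one] at this
      linarith
  have hbd : ∀ {K : NNReal} {g : ℝ → ℝ}, LipschitzWith K g →
      IntegrableOn (fun x => √(1 + (deriv g x) ^ 2)) (Isig σ) := fun {K g} hg =>
    Measure.integrableOn_of_bounded (M := (K : ℝ) ^ 2 + 1) hfin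
      (Measurable.aestronglyMeasurable (by fun_prop)) (Filter.Eventually.of_forall fun x => by
        have := (abs_le.1 (abs_sqrt_sub_one_le (abs_deriv_le hg x))).2
        rw [Real.norm_eq_abs, abs_of_nonneg (Real.sqrt_nonneg _)]
        linarith)
  have hLh : LipschitzWith (K₁ + K₂) (fun y => g₁ y - g₂ y) := hL₁.sub hL₂
  have hiarc : IntegrableOn (fun x : ℝ => 2 * √(1 - (x / (1 + σ)) ^ 2)) (Isig σ) :=
    Continuous.integrableOn_Icc (by fun_prop)
  have hih : IntegrableOn (fun x => x / (1 + σ) * deriv (fun y => g₁ y - g₂ y) x) (Isig σ) := by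
    refine Measure.integrableOn_of_bounded (M := 1 * (K₁ + K₂ : NNReal)) hfin
      (Measurable.aestronglyMeasurable (by fun_prop)) ?_
    refine (ae_restrict_iff' hmI).2 (Filter.Eventually.of_forall fun x hx => ?_)
    rw [norm_mul, Real.norm_eq_abs, Real.norm_eq_abs]
    refine mul_le_mul ?_ (abs_deriv_le hLh x) (abs_nonneg _) zero_le_one
    rw [abs_div, abs_of_pos hs, div_le_one hs]
    exact (abs_le.2 hx).trans (by nlinarith [ell_lt_one])
  have hE : Integrable (fun x => (deriv (fun y => g₁ y - utilde σ y) x ^ 2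
      + deriv (fun y => g₂ y + utilde σ y) x ^ 2) / 200) := (hi₁.add hi₂).div_const 200
  have hdiff : IntegrableOn (fun x => 2 * √(1 - (x / (1 + σ)) ^ 2)
      - x / (1 + σ) * deriv (fun y => g₁ y - g₂ y) x) (Isig σ) := hiarc.sub hih
  have hinner : ∫ x in Isig σ, (2 * √(1 - (x / (1 + σ)) ^ 2)
          - x / (1 + σ) * deriv (fun y => g₁ y - g₂ y) x
          + (deriv (fun y => g₁ y - utilde σ y) x ^ 2
            + deriv (fun y => g₂ y + utilde σ y) x ^ 2) / 200)
      ≤ ∫ x in Isig σ, (√(1 + (deriv g₁ x) ^ 2) + √(1 + (deriv g₂ x) ^ 2)) := by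
    refine setIntegral_mono_on_ae
      (hdiff.add hE.integrableOn)
      ((hbd hL₁).add (hbd hL₂)) hmI ?_
    filter_upwards [hin, hL₁.ae_differentiableAt_real, hL₂.ae_differentiableAt_real,
      (Set.toFinite {-((1 + σ) * ell), (1 + σ) * ell}).countable.ae_notMem volume]
      with x hx hd₁ hd₂ hne hxI
    simp only [Set.mem_insert_iff, Set.mem_singleton_iff, not_or] at hne
    have hxo : x ∈ Set.Ioo (-((1 + σ) * ell)) ((1 + σ) * ell) :=
      ⟨lt_of_le_of_ne hxI.1 (Ne.symm hne.1), lt_of_le_of_ne hxI.2 hne.2⟩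
    have hdu := utilde_hasDerivAt hs hxo
    have ht : |x / (1 + σ)| < 1 := by
      rw [abs_div, abs_of_pos hs, div_lt_one hs]
      exact (abs_lt.2 hxo).trans (by nlinarith [ell_lt_one])
    have d₁ : deriv (fun y => g₁ y - utilde σ y) x = deriv g₁ x - deriv (utilde σ) x :=
      deriv_fun_sub hd₁ hdu.differentiableAt
    have d₂ : deriv (fun y => g₂ y + utilde σ y) x = deriv g₂ x + deriv (utilde σ) x :=
      deriv_fun_add hd₂ hdu.differentiableAt
    have d₃ : deriv (fun y => g₁ y - g₂ y) x = deriv g₁ x - deriv g₂ x :=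
      deriv_fun_sub hd₁ hd₂
    have := arc_ineq ht hdu.deriv (abs_deriv_utilde_le hs x) (hx hxI).1 (hx hxI).2
    rw [d₁, d₂, d₃]
    linarith [sq_nonneg (deriv g₁ x - deriv (utilde σ) x),
      sq_nonneg (deriv g₂ x + deriv (utilde σ) x)]
  have hcal : ∫ x in Isig σ, x / (1 + σ) * deriv (fun y => g₁ y - g₂ y) x
      = -(1 / (1 + σ)) * mlens := by
    rw [← harea]
    exact calibration ha.le hLh fun x hx => sub_eq_zero.2 (heq x hx)
  have harc : ∫ x in Isig σ, √(1 - (x / (1 + σ)) ^ 2)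
      = (1 + σ) * (Real.pi / 3 + Real.sqrt 3 / 4) := integral_arc hs
  rw [integral_add hdiff hE.integrableOn,
    integral_sub hiarc hih, integral_const_mul, hcal, harc,
    integral_add (hbd hL₁) (hbd hL₂)] at hinner
  have hsplit := integral_add_compl hmI hE
  have htot : ∫ x, (deriv (fun y => g₁ y - utilde σ y) x ^ 2
        + deriv (fun y => g₂ y + utilde σ y) x ^ 2) / 200
      = ((∫ x, deriv (fun y => g₁ y - utilde σ y) x ^ 2)
        + ∫ x, deriv (fun y => g₂ y + utilde σ y) x ^ 2) / 200 := by
    rw [integral_div, integral_add hi₁ hi₂]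
  have halg : mlens * (σ ^ 2 / (1 + σ)) = 2 * ((1 + σ) * (Real.pi / 3 + Real.sqrt 3 / 4))
      - -(1 / (1 + σ)) * mlens - 4 * Real.pi / 3 - Real.sqrt 3 * σ := by
    unfold mlens; field_simp; ring
  linarith

/-! ### The stability estimate -/

/-- Quantitative stability of the lens among graph-type perturbations (graph form
of Theorem 4.2): for every `R ≥ 2` there are `ε₀ ∈ (0,1/4)` and `κ₀ > 0` such that
for all `σ` with `|σ| ≤ ε₀` and all Lipschitz `g₁, g₂` with `g₁ = g₂` off `I_σ`,
vanishing outside `[−R,R]`, with `∫_{I_σ}(g₁ − g₂) = m` and `ε₀`-close in `C¹` to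
the (rescaled) lens profiles, the perimeter deficit of the graph-type partition
`(F₁,F₂,F₃)` with respect to the standard lens partition `(L₁,L₂,L₃)` dominates
`κ₀` times the square of their `L¹`-distance. -/
theorem lens_stability_graph_form (R : ℝ) (hR : 2 ≤ R) :
    ∃ ε₀ κ₀ : ℝ, ε₀ ∈ Set.Ioo (0 : ℝ) (1 / 4) ∧ 0 < κ₀ ∧
      ∀ σ : ℝ, |σ| ≤ ε₀ →
      ∀ g₁ g₂ : ℝ → ℝ, ∀ K₁ K₂ : NNReal,
        LipschitzWith K₁ g₁ → LipschitzWith K₂ g₂ →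
        (∀ x ∉ Isig σ, g₁ x = g₂ x) →
        (∀ x ∉ Set.Icc (-R) R, g₁ x = 0 ∧ g₂ x = 0) →
        (∫ x in Isig σ, (g₁ x - g₂ x)) = mlens →
        (∀ᵐ x ∂(volume : Measure ℝ), x ∉ Isig σ →
          |g₁ x| + |deriv g₁ x| ≤ ε₀) →
        (∀ᵐ x ∂(volume : Measure ℝ), x ∈ Isig σ →
          |g₁ x - utilde σ x| + |deriv g₁ x - deriv (utilde σ) x| ≤ ε₀ ∧
          |g₂ x - (-(utilde σ x))| + |deriv g₂ x - deriv (fun y => -utilde σ y) x| ≤ ε₀) →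
        (∫ x in (Isig σ)ᶜ, (Real.sqrt (1 + (deriv g₁ x) ^ 2) - 1))
          + (∫ x in Isig σ, Real.sqrt (1 + (deriv g₁ x) ^ 2))
          + (∫ x in Isig σ, Real.sqrt (1 + (deriv g₂ x) ^ 2))
          - 4 * Real.pi / 3 - Real.sqrt 3 * σ
        ≥ κ₀ *
          ((volume (graphBetween g₁ g₂ ∆ graphBetween ulens (fun x => -ulens x))
            + volume (graphAbove g₁ ∆ graphAbove ulens)
            + volume (graphBelow g₂ ∆ graphBelow (fun x => -ulens x))).toReal / 2) ^ 2 := by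
  have hT : 0 < R + 1 := by linarith
  refine ⟨1 / 8, 1 / (153600 * (R + 1) ^ 4), ⟨by norm_num, by norm_num⟩, by positivity, ?_⟩
  intro σ hσ g₁ g₂ K₁ K₂ hL₁ hL₂ heq hz harea hout hin
  have hs : 7 / 8 ≤ 1 + σ := by linarith [(abs_le.1 hσ).1]
  have hs' : 1 + σ ≤ 9 / 8 := by linarith [(abs_le.1 hσ).2]
  have hs0 : 0 < 1 + σ := by linarith
  have hIR : Isig σ ⊆ Set.Icc (-R) R := by
    have : (1 + σ) * ell ≤ R := by nlinarith [ell_lt_one, ell_pos]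
    exact Set.Icc_subset_Icc (by linarith) this
  have hRT : Set.Icc (-R) R ⊆ Set.Icc (-(R + 1)) (R + 1) :=
    Set.Icc_subset_Icc (by linarith) (by linarith)
  have hdef := deficit_ge hσ hL₁ hL₂ heq hz hIR harea
    (by filter_upwards [hout] with x hx hxI
        linarith [hx hxI, abs_nonneg (g₁ x)])
    (by filter_upwards [hin] with x hx hxI
        obtain ⟨h1, h2⟩ := hx hxI
        have e : deriv (fun y => -utilde σ y) x = -deriv (utilde σ) x := deriv.fun_neg
        rw [e, sub_neg_eq_add (deriv g₂ x)] at h2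
        exact ⟨by linarith [abs_nonneg (g₁ x - utilde σ x)],
          by linarith [abs_nonneg (g₂ x - -utilde σ x)]⟩)
  have hLG₁ : LipschitzWith (K₁ + 2) (fun y => g₁ y - utilde σ y) := hL₁.sub (utilde_lipschitz hs0)
  have hLG₂ : LipschitzWith (K₂ + 2) (fun y => g₂ y + utilde σ y) := hL₂.add (utilde_lipschitz hs0)
  have hz₁ : ∀ x ∉ Set.Icc (-R) R, g₁ x - utilde σ x = 0 := fun x hx => by
    rw [(hz x hx).1, utilde_zero hs0 fun h => hx (hIR h), sub_zero]
  have hz₂ : ∀ x ∉ Set.Icc (-R) R, g₂ x + utilde σ x = 0 := fun x hx => by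
    rw [(hz x hx).2, utilde_zero hs0 fun h => hx (hIR h), add_zero]
  -- The larger interval `[-(R+1), R+1]` has endpoints at which the deviations vanish.
  have hend : -(R + 1) ∉ Set.Icc (-R) R := fun h => by linarith [h.1]
  have hP₁ := sq_le_integral_deriv_sq hLG₁ hT (fun x hx => hz₁ x fun h => hx (hRT h)) (hz₁ _ hend)
  have hP₂ := sq_le_integral_deriv_sq hLG₂ hT (fun x hx => hz₂ x fun h => hx (hRT h)) (hz₂ _ hend)
  have hQ₁ : 0 ≤ ∫ x, deriv (fun y => g₁ y - utilde σ y) x ^ 2 := integral_nonneg fun _ => sq_nonneg _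
  have hQ₂ : 0 ≤ ∫ x, deriv (fun y => g₂ y + utilde σ y) x ^ 2 := integral_nonneg fun _ => sq_nonneg _
  set Q₁ := ∫ x, deriv (fun y => g₁ y - utilde σ y) x ^ 2
  set Q₂ := ∫ x, deriv (fun y => g₂ y + utilde σ y) x ^ 2
  have hu0 : ∀ x ∉ Set.Icc (-R) R, ulens x = 0 := fun x hx =>
    ulens_zero (by
      by_contra h
      have := (abs_le.1 (not_lt.1 h))
      exact hx ⟨by linarith [this.1, ell_lt_one], by linarith [this.2, ell_lt_one]⟩)
  have hdil : ∀ x, |utilde σ x - ulens x| ≤ 4 * (R + 1) * |σ| := by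
    intro x
    by_cases hx : x ∈ Set.Icc (-R) R
    · exact (abs_utilde_sub_ulens_le hσ hR (abs_le.2 hx)).trans
        (mul_le_mul_of_nonneg_right (by linarith) (abs_nonneg _))
    · rw [hu0 x hx, utilde_zero hs0 fun h => hx (hIR h)]; simp; positivity
  have hdist := partition_dist_le (g₁ := g₁) (g₂ := g₂) (v₁ := ulens) (v₂ := fun x => -ulens x)
    (M₁ := √(2 * (R + 1) * Q₁) + 4 * (R + 1) * |σ|) (M₂ := √(2 * (R + 1) * Q₂) + 4 * (R + 1) * |σ|)
    hT hL₁.continuous hL₂.continuous ulens_lipschitz.continuous ulens_lipschitz.continuous.neg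
    (fun x => by
      have h1 : |g₁ x - utilde σ x| ≤ √(2 * (R + 1) * Q₁) := Real.abs_le_sqrt (hP₁ x)
      have := abs_sub_le (g₁ x) (utilde σ x) (ulens x)
      linarith [hdil x])
    (fun x => by
      have h1 : |g₂ x + utilde σ x| ≤ √(2 * (R + 1) * Q₂) := Real.abs_le_sqrt (hP₂ x)
      have := abs_sub_le (g₂ x) (-utilde σ x) (-ulens x)
      rw [sub_neg_eq_add (g₂ x) (utilde σ x), neg_sub_neg, abs_sub_comm (ulens x)] at this
      linarith [hdil x])
    (fun x hx => by
      have hx' : x ∉ Set.Icc (-R) R := fun h => hx (hRT h)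
      rw [(hz x hx').1, hu0 x hx'])
    (fun x hx => by
      have hx' : x ∉ Set.Icc (-R) R := fun h => hx (hRT h)
      rw [(hz x hx').2, hu0 x hx', neg_zero])
  set D := (volume (graphBetween g₁ g₂ ∆ graphBetween ulens (fun x => -ulens x))
    + volume (graphAbove g₁ ∆ graphAbove ulens)
    + volume (graphBelow g₂ ∆ graphBelow (fun x => -ulens x))).toReal / 2
  have hD0 : 0 ≤ D := by positivity
  have hA := Real.sq_sqrt (show 0 ≤ 2 * (R + 1) * Q₁ by positivity)
  have hB := Real.sq_sqrt (show 0 ≤ 2 * (R + 1) * Q₂ by positivity)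
  have hD2 := pow_le_pow_left₀ hD0 hdist 2
  set A := √(2 * (R + 1) * Q₁)
  set B := √(2 * (R + 1) * Q₂)
  set T := R + 1 with hTdef
  have hT1 : 1 ≤ T := by linarith
  -- `(A + B + c)² ≤ 3 (A² + B² + c²)`, and `1 ≤ T` makes the coefficients homogeneous.
  have hbound : D ^ 2 ≤ 768 * T ^ 4 * (σ ^ 2 + Q₁ + Q₂) := by
    have h1 : (A + B + 8 * T * |σ|) ^ 2 ≤ 3 * (A ^ 2 + B ^ 2 + (8 * T * |σ|) ^ 2) := by
      nlinarith [sq_nonneg (A - B), sq_nonneg (A - 8 * T * |σ|), sq_nonneg (B - 8 * T * |σ|)]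
    have h2 : (8 * T * |σ|) ^ 2 = 64 * T ^ 2 * σ ^ 2 := by rw [mul_pow, sq_abs]; ring
    rw [h2, hA, hB] at h1
    have h3 : (2 * T * (A + 4 * T * |σ| + (B + 4 * T * |σ|))) ^ 2
        = 4 * T ^ 2 * (A + B + 8 * T * |σ|) ^ 2 := by ring
    rw [h3] at hD2
    have h4 := mul_le_mul_of_nonneg_left h1 (show 0 ≤ 4 * T ^ 2 by positivity)
    have h5 : T ^ 3 * (Q₁ + Q₂) ≤ T ^ 4 * (Q₁ + Q₂) :=
      mul_le_mul_of_nonneg_right (pow_le_pow_right₀ hT1 (by norm_num)) (by positivity)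
    have h6 : 0 ≤ T ^ 4 * (Q₁ + Q₂) := by positivity
    nlinarith
  have hm : 1 ≤ mlens := by
    unfold mlens
    have : √3 ≤ 2 := by rw [Real.sqrt_le_left (by norm_num)]; norm_num
    linarith [Real.pi_gt_three]
  have hσ2 : σ ^ 2 / 200 ≤ mlens * (σ ^ 2 / (1 + σ)) := by
    have : σ ^ 2 / 200 ≤ σ ^ 2 / (1 + σ) :=
      div_le_div_of_nonneg_left (sq_nonneg _) hs0 (by linarith)
    have h0 : 0 ≤ σ ^ 2 / (1 + σ) := by positivity
    nlinarith
  have hfinal : 1 / (153600 * T ^ 4) * D ^ 2 ≤ (σ ^ 2 + Q₁ + Q₂) / 200 := by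
    rw [one_div, inv_mul_le_iff₀ (by positivity)]
    linarith
  linarith
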